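/- arXiv:2306.00109 — 6 statements merged into one kernel-verified Lean document; each statement's English description precedes it below -/
import Mathlib

section
/- Let D be an integral residuated lattice, and let B, C ⊆ D be subsets with B ∪ C = D, B ∩ C = {1}, and b < c for all b ∈ B∖{1} and c ∈ C. Assume C is closed under ∨, ∧, ·, \, / and B is closed under ∧, ·, \, /. Then for all b ∈ B∖{1} and c ∈ C, c·b = b and b·c = b (so D is the 1-sum of B and C). -/
/-- An integral residuated lattice: a lattice, a monoid, residuation for the two
divisions `ld x z` (i.e. `x \ z`) and `rd z y` (i.e. `z / y`), with `1` the top. -/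
class IRL (α : Type*) extends Lattice α, Monoid α where
  ld : α → α → α
  rd : α → α → α
  mul_le_iff_ld : ∀ x y z : α, x * y ≤ z ↔ y ≤ ld x z
  mul_le_iff_rd : ∀ x y z : α, x * y ≤ z ↔ x ≤ rd z y
  le_one : ∀ x : α, x ≤ 1

namespace IRL

variable {α : Type*} [IRL α]

/-- `theta F x y` iff `x\y ∈ F` and `y\x ∈ F`. -/
def theta (F : Set α) (x y : α) : Prop := ld x y ∈ F ∧ ld y x ∈ F

/-- The equivalence class `[x]_F`. -/
def cls (F : Set α) (x : α) : Set α := {y | theta F x y}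

/-- A congruence filter of an IRL. -/
structure IsCongFilter (F : Set α) : Prop where
  nonempty : F.Nonempty
  upward : ∀ x ∈ F, ∀ y : α, x ≤ y → y ∈ F
  mul_mem : ∀ x ∈ F, ∀ y ∈ F, x * y ∈ F
  conjL : ∀ x ∈ F, ∀ y : α, ld y (x * y) ∈ F
  conjR : ∀ x ∈ F, ∀ y : α, rd (y * x) y ∈ F

end IRL

/-! The maps `· * b` and `b * ·` are residuated and send `1` to `b`. Let `l` be either of them,
with residual `u`. For `c ∈ C` the element `l c ≤ l 1 = b` cannot lie in `C`, so it lies in `B`,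
and hence so does `u (l c)`. But `c ≤ u (l c)`, and the only element of `B` above an element of `C`
is `1`. Therefore `l c = l (u (l c)) = l 1 = b`. -/

section OrderSeparation

variable {α : Type*} [One α] {B C : Set α}

theorem mem_of_le_of_forall_lt [Preorder α] (hunion : B ∪ C = Set.univ)
    (hlt : ∀ b ∈ B, b ≠ 1 → ∀ c ∈ C, b < c) {b d : α} (hb : b ∈ B) (hb1 : b ≠ 1) (hdb : d ≤ b) :
    d ∈ B :=
  (hunion.ge (Set.mem_univ d)).resolve_right fun hd ↦ (hlt b hb hb1 d hd).not_ge hdb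

theorem eq_one_of_le_of_forall_lt [Preorder α] (hlt : ∀ b ∈ B, b ≠ 1 → ∀ c ∈ C, b < c)
    {b c : α} (hb : b ∈ B) (hc : c ∈ C) (hcb : c ≤ b) : b = 1 :=
  by_contra fun hb1 ↦ (hlt b hb hb1 c hc).not_ge hcb

theorem galoisConnection_apply_eq_apply_one [PartialOrder α] (hunion : B ∪ C = Set.univ)
    (hlt : ∀ b ∈ B, b ≠ 1 → ∀ c ∈ C, b < c) {l u : α → α} (gc : GaloisConnection l u)
    (hu : Set.MapsTo u B B) (hl : l 1 ∈ B) (hl1 : l 1 ≠ 1) {c : α} (hc : c ∈ C) (hc1 : c ≤ 1) :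
    l c = l 1 := by
  have hlc : l c ∈ B := mem_of_le_of_forall_lt hunion hlt hl hl1 (gc.monotone_l hc1)
  have hulc : u (l c) = 1 := eq_one_of_le_of_forall_lt hlt (hu hlc) hc (gc.le_u_l c)
  calc
    l c = l (u (l c)) := (gc.l_u_l_eq_l c).symm
    _ = l 1 := by rw [hulc]

end OrderSeparation

theorem one_sum_unique_general {M : Type*} [PartialOrder M] [MulOneClass M] {ld rd : M → M → M}
    (gc_ld : ∀ x, GaloisConnection (x * ·) (ld x)) (gc_rd : ∀ y, GaloisConnection (· * y) (rd · y))
    (le_one : ∀ x : M, x ≤ 1) {B C : Set M} (hunion : B ∪ C = Set.univ)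
    (hlt : ∀ b ∈ B, b ≠ 1 → ∀ c ∈ C, b < c)
    (hBld : ∀ x ∈ B, ∀ y ∈ B, ld x y ∈ B) (hBrd : ∀ x ∈ B, ∀ y ∈ B, rd x y ∈ B) :
    ∀ b ∈ B, b ≠ 1 → ∀ c ∈ C, c * b = b ∧ b * c = b := by
  intro b hb hb1 c hc
  constructor
  · simpa only [one_mul] using galoisConnection_apply_eq_apply_one hunion hlt (gc_rd b)
      (fun x hx ↦ hBrd x hx b hb) (by rwa [one_mul]) (by rwa [one_mul]) hc (le_one c)
  · simpa only [mul_one] using galoisConnection_apply_eq_apply_one hunion hlt (gc_ld b)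
      (fun x hx ↦ hBld b hb x hx) (by rwa [mul_one]) (by rwa [mul_one]) hc (le_one c)

namespace IRL

variable {α : Type*} [IRL α]

theorem gc_mul_left_ld (x : α) : GaloisConnection (x * ·) (ld x) :=
  fun y z ↦ mul_le_iff_ld x y z

theorem gc_mul_right_rd (y : α) : GaloisConnection (· * y) (rd · y) :=
  fun x z ↦ mul_le_iff_rd x y z

end IRL

/-- if `D` is an IRL, `B ∪ C = D`, `B ∩ C = {1}`, every element of
`B ∖ {1}` is strictly below every element of `C`, `C` is closed under the five
operations and `B` under `∧, ·, \, /`, then `c·b = b` and `b·c = b` for all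
`b ∈ B ∖ {1}`, `c ∈ C` (so `D` is the 1-sum of `B` and `C`). -/
theorem one_sum_unique {D : Type*} [IRL D] (B C : Set D)
    (hunion : B ∪ C = Set.univ)
    (hinter : B ∩ C = {1})
    (hlt : ∀ b ∈ B, b ≠ 1 → ∀ c ∈ C, b < c)
    (hCsup : ∀ x ∈ C, ∀ y ∈ C, x ⊔ y ∈ C)
    (hCinf : ∀ x ∈ C, ∀ y ∈ C, x ⊓ y ∈ C)
    (hCmul : ∀ x ∈ C, ∀ y ∈ C, x * y ∈ C)
    (hCld : ∀ x ∈ C, ∀ y ∈ C, IRL.ld x y ∈ C)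
    (hCrd : ∀ x ∈ C, ∀ y ∈ C, IRL.rd x y ∈ C)
    (hBinf : ∀ x ∈ B, ∀ y ∈ B, x ⊓ y ∈ B)
    (hBmul : ∀ x ∈ B, ∀ y ∈ B, x * y ∈ B)
    (hBld : ∀ x ∈ B, ∀ y ∈ B, IRL.ld x y ∈ B)
    (hBrd : ∀ x ∈ B, ∀ y ∈ B, IRL.rd x y ∈ B) :
    ∀ b ∈ B, b ≠ 1 → ∀ c ∈ C, c * b = b ∧ b * c = b :=
  one_sum_unique_general IRL.gc_mul_left_ld IRL.gc_mul_right_rd IRL.le_one hunion hlt hBld hBrd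
end

section
/- Let D be a gluing of B and C over F. Then for every b ∈ B∖F and c ∈ C∖F: c\b = b/c, c\b θ_F b, and b' ≤ c\b for every b' ∈ D with b' θ_F b; that is, c\b = b/c is the maximum of the class [b]_F (so this maximum exists and does not depend on the choice of c). -/
/-- A gluing of `B` and `C` over the congruence filter `F = B ∩ C`. -/
structure GluingOverF {D : Type*} [IRL D] (B C F : Set D) : Prop where
  union_eq : B ∪ C = Set.univ
  inter_eq : B ∩ C = F
  filt : IRL.IsCongFilter F
  one_mem : (1 : D) ∈ F
  lt_BC : ∀ b ∈ B \ F, ∀ c ∈ C \ F, b < c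
  lt_CF : ∀ c ∈ C \ F, ∀ f ∈ F, f ≠ 1 → c < f
  C_sup : ∀ x ∈ C, ∀ y ∈ C, x ⊔ y ∈ C
  C_inf : ∀ x ∈ C, ∀ y ∈ C, x ⊓ y ∈ C
  C_mul : ∀ x ∈ C, ∀ y ∈ C, x * y ∈ C
  C_ld : ∀ x ∈ C, ∀ y ∈ C, IRL.ld x y ∈ C
  C_rd : ∀ x ∈ C, ∀ y ∈ C, IRL.rd x y ∈ C
  B_inf : ∀ x ∈ B, ∀ y ∈ B, x ⊓ y ∈ B
  B_mul : ∀ x ∈ B, ∀ y ∈ B, x * y ∈ B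
  B_ld : ∀ x ∈ B, ∀ y ∈ B, IRL.ld x y ∈ B
  B_rd : ∀ x ∈ B, ∀ y ∈ B, IRL.rd x y ∈ B

/-! By residuation, `x ≤ c\b` iff `c ≤ b/x`, and `x ≤ b/c` iff `c ≤ x\b`. For a congruence filter
`F`, `x\b ∈ F` iff `b/x ∈ F`. In a gluing `c` is a lower bound of `F`, so both `c\b` and `b/c`
dominate every `x` with `x\b ∈ F`, in particular every `x` in the class of `b`. Conversely `c\b`
and `b/c` lie in `B`, because `C` is closed under products and no element of `C` is below `b`.
Hence `b/(c\b)` and `(b/c)\b` also lie in `B`; they are above `c`, and the only elements of `B`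
above `c` are those of `F`. So `c\b` and `b/c` are themselves among the elements `x` with
`x\b ∈ F`, and each dominates the other. -/

namespace IRL

variable {α : Type*} [IRL α] {F : Set α} {b c x y z : α}

theorem mul_ld_le : x * ld x y ≤ y :=
  (mul_le_iff_ld _ _ _).2 le_rfl

theorem rd_mul_le : rd y x * x ≤ y :=
  (mul_le_iff_rd _ _ _).2 le_rfl

instance : MulRightMono α where
  elim x y z h := (mul_le_iff_rd y x (z * x)).2 (h.trans ((mul_le_iff_rd _ _ _).1 le_rfl))

theorem le_ld_iff_le_rd : y ≤ ld x z ↔ x ≤ rd z y :=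
  (mul_le_iff_ld x y z).symm.trans (mul_le_iff_rd x y z)

theorem ld_le_ld_left (h : y ≤ z) : ld x y ≤ ld x z :=
  (mul_le_iff_ld _ _ _).1 (mul_ld_le.trans h)

theorem rd_le_rd_right (h : y ≤ z) : rd y x ≤ rd z x :=
  (mul_le_iff_rd _ _ _).1 (rd_mul_le.trans h)

theorem le_ld_self : y ≤ ld x y :=
  (mul_le_iff_ld _ _ _).1 (mul_le_of_le_one_left' (le_one x))

theorem le_rd_ld : x ≤ rd y (ld x y) :=
  le_ld_iff_le_rd.1 le_rfl

theorem le_ld_rd : x ≤ ld (rd y x) y :=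
  le_ld_iff_le_rd.2 le_rfl

theorem le_rd_of_ld_mem (hc : c ∈ lowerBounds F) (h : ld x b ∈ F) : x ≤ rd b c :=
  le_ld_iff_le_rd.1 (hc h)

namespace IsCongFilter

theorem one_mem (hF : IsCongFilter F) : (1 : α) ∈ F :=
  let ⟨x, hx⟩ := hF.nonempty
  hF.upward x hx 1 (le_one x)

theorem ld_mem_of_le (hF : IsCongFilter F) (h : x ≤ y) : ld x y ∈ F :=
  hF.upward 1 hF.one_mem _ ((mul_le_iff_ld _ _ _).1 ((mul_one x).trans_le h))

theorem ld_mem_iff_rd_mem (hF : IsCongFilter F) : ld x y ∈ F ↔ rd y x ∈ F :=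
  ⟨fun h => hF.upward _ (hF.conjR _ h x) _ (rd_le_rd_right mul_ld_le),
    fun h => hF.upward _ (hF.conjL _ h x) _ (ld_le_ld_left rd_mul_le)⟩

theorem theta_ld_of_ld_ld_mem (hF : IsCongFilter F) (h : ld (ld c b) b ∈ F) :
    theta F (ld c b) b :=
  ⟨h, hF.ld_mem_of_le le_ld_self⟩

theorem le_ld_of_ld_mem (hF : IsCongFilter F) (hc : c ∈ lowerBounds F) (h : ld x b ∈ F) :
    x ≤ ld c b :=
  le_ld_iff_le_rd.2 (hc (hF.ld_mem_iff_rd_mem.1 h))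

end IsCongFilter

end IRL

namespace GluingOverF

open IRL

variable {D : Type*} [IRL D] {B C F : Set D} {b c x : D}

theorem mem_left_of_notMem_right (hg : GluingOverF B C F) (hx : x ∉ C) : x ∈ B :=
  (hg.union_eq.ge (Set.mem_univ x)).resolve_right hx

theorem mem_lowerBounds (hg : GluingOverF B C F) (hc : c ∈ C \ F) : c ∈ lowerBounds F := by
  intro f hf
  obtain rfl | hf1 := eq_or_ne f 1
  · exact le_one c
  · exact (hg.lt_CF c hc f hf hf1).le

theorem mem_filter_of_le (hg : GluingOverF B C F) (hc : c ∈ C \ F) (hx : x ∈ B) (h : c ≤ x) :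
    x ∈ F := by
  by_contra hxF
  exact (hg.lt_BC x ⟨hx, hxF⟩ c hc).not_ge h

theorem not_le_of_mem_right (hg : GluingOverF B C F) (hb : b ∈ B \ F) (hx : x ∈ C) : ¬x ≤ b := by
  intro h
  have hxF : x ∉ F := fun hxF => hb.2 (hg.filt.upward x hxF b h)
  exact (hg.lt_BC b hb x ⟨hx, hxF⟩).not_ge h

theorem ld_mem_left (hg : GluingOverF B C F) (hb : b ∈ B \ F) (hc : c ∈ C) : ld c b ∈ B :=
  hg.mem_left_of_notMem_right fun h => hg.not_le_of_mem_right hb (hg.C_mul c hc _ h) mul_ld_le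

theorem rd_mem_left (hg : GluingOverF B C F) (hb : b ∈ B \ F) (hc : c ∈ C) : rd b c ∈ B :=
  hg.mem_left_of_notMem_right fun h => hg.not_le_of_mem_right hb (hg.C_mul _ h c hc) rd_mul_le

theorem rd_ld_mem_filter (hg : GluingOverF B C F) (hb : b ∈ B \ F) (hc : c ∈ C \ F) :
    rd b (ld c b) ∈ F :=
  hg.mem_filter_of_le hc (hg.B_rd b hb.1 _ (hg.ld_mem_left hb hc.1)) le_rd_ld

theorem ld_rd_mem_filter (hg : GluingOverF B C F) (hb : b ∈ B \ F) (hc : c ∈ C \ F) :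
    ld (rd b c) b ∈ F :=
  hg.mem_filter_of_le hc (hg.B_ld _ (hg.rd_mem_left hb hc.1) b hb.1) le_ld_rd

end GluingOverF

/-- in a gluing of `B` and `C` over `F`, for `b ∈ B∖F` and `c ∈ C∖F`,
`c\b = b/c`, `c\b θ_F b`, and `b' ≤ c\b` for every `b'` with `b' θ_F b`; i.e.
`c\b = b/c` is the maximum of the class `[b]_F`. -/
theorem gluing_max_of_class {D : Type*} [IRL D] {B C F : Set D}
    (hg : GluingOverF B C F) :
    ∀ b ∈ B \ F, ∀ c ∈ C \ F,
      IRL.ld c b = IRL.rd b c ∧ IRL.theta F (IRL.ld c b) b ∧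
      ∀ b' : D, IRL.theta F b' b → b' ≤ IRL.ld c b := by
  intro b hb c hc
  have hcF : c ∈ lowerBounds F := hg.mem_lowerBounds hc
  have hld : IRL.ld (IRL.ld c b) b ∈ F :=
    hg.filt.ld_mem_iff_rd_mem.2 (hg.rd_ld_mem_filter hb hc)
  have hrd : IRL.ld (IRL.rd b c) b ∈ F := hg.ld_rd_mem_filter hb hc
  exact ⟨(IRL.le_rd_of_ld_mem hcF hld).antisymm (hg.filt.le_ld_of_ld_mem hcF hrd),
    hg.filt.theta_ld_of_ld_ld_mem hld, fun _ h => hg.filt.le_ld_of_ld_mem hcF h.1⟩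
end

section
/- Let B be an integral residuated lattice and F a congruence filter of B such that every element of F is strictly greater than every element of B∖F, and suppose F has a least element ⊥. Then for every x ∈ B∖F: x·⊥ and ⊥·x are each the minimum of the class [x]_F (in particular this minimum exists and x·⊥ = ⊥·x), and ⊥\x and x/⊥ are each the maximum of the class [x]_F (in particular this maximum exists and ⊥\x = x/⊥). -/
/-! A congruence filter with least element `⊥` is the principal filter `{f | ⊥ ≤ f}`, so
`x θ_F y` says `x · ⊥ ≤ y` and `y · ⊥ ≤ x`, and by residuation `[x]_F` is the interval
`[x · ⊥, x / ⊥]`. Closure under conjugation and minimality of `⊥` give `⊥ · y ≤ y · ⊥` and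
`y · ⊥ ≤ ⊥ · y`, so `⊥` is central and the left and right versions of both endpoints agree. -/

namespace IRL

variable {α : Type*} [IRL α]

theorem mul_le_left (x y : α) : x * y ≤ x :=
  (mul_le_iff_ld x y x).2 ((le_one y).trans ((mul_le_iff_ld x 1 x).1 (mul_one x).le))

theorem le_rd_self (x y : α) : x ≤ rd x y :=
  (mul_le_iff_rd x y x).1 (mul_le_left x y)

theorem ld_eq_rd_of_forall_commute {b : α} (hb : ∀ y, Commute b y) (x : α) :
    ld b x = rd x b :=
  eq_of_forall_le_iff fun y => by
    rw [← mul_le_iff_ld, ← mul_le_iff_rd, (hb y).eq]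

theorem cls_Ici (b x : α) : cls (Set.Ici b) x = Set.Icc (x * b) (rd x b) := by
  ext y
  change b ≤ ld x y ∧ b ≤ ld y x ↔ x * b ≤ y ∧ y ≤ rd x b
  rw [← mul_le_iff_ld, ← mul_le_iff_ld, ← mul_le_iff_rd]

theorem isLeast_cls_Ici (b x : α) : IsLeast (cls (Set.Ici b) x) (x * b) :=
  cls_Ici b x ▸ isLeast_Icc ((mul_le_left x b).trans (le_rd_self x b))

theorem isGreatest_cls_Ici (b x : α) : IsGreatest (cls (Set.Ici b) x) (rd x b) :=
  cls_Ici b x ▸ isGreatest_Icc ((mul_le_left x b).trans (le_rd_self x b))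

namespace IsCongFilter

variable {F : Set α} {b : α}

theorem eq_Ici_of_isLeast (hF : IsCongFilter F) (hb : IsLeast F b) : F = Set.Ici b :=
  Set.Subset.antisymm hb.2 fun y hy => hF.upward b hb.1 y hy

theorem commute_of_isLeast (hF : IsCongFilter F) (hb : IsLeast F b) (y : α) : Commute b y :=
  le_antisymm
    ((mul_le_iff_rd b y (y * b)).2 (hb.2 (hF.conjR b hb.1 y)))
    ((mul_le_iff_ld y b (b * y)).2 (hb.2 (hF.conjL b hb.1 y)))

end IsCongFilter

end IRL

theorem bot_filter_sigma_gamma_general {B : Type*} [IRL B] {F : Set B}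
    (hF : IRL.IsCongFilter F) {b : B} (hb : IsLeast F b) (x : B) :
    IsLeast (IRL.cls F x) (x * b) ∧
    IsLeast (IRL.cls F x) (b * x) ∧
    IsGreatest (IRL.cls F x) (IRL.ld b x) ∧
    IsGreatest (IRL.cls F x) (IRL.rd x b) := by
  have hcomm : ∀ y, Commute b y := hF.commute_of_isLeast hb
  rw [hF.eq_Ici_of_isLeast hb, (hcomm x).eq, IRL.ld_eq_rd_of_forall_commute hcomm x]
  have hmin := IRL.isLeast_cls_Ici b x
  have hmax := IRL.isGreatest_cls_Ici b x
  exact ⟨hmin, hmin, hmax, hmax⟩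

/-- if `F` is a congruence filter of an IRL `B`, every element of `F`
is strictly greater than every element of `B ∖ F`, and `F` has a least element `⊥`,
then for every `x ∉ F`, `x·⊥` and `⊥·x` are each the minimum of `[x]_F`, and `⊥\x`
and `x/⊥` are each the maximum of `[x]_F`. -/
theorem bot_filter_sigma_gamma {B : Type*} [IRL B] (F : Set B)
    (hF : IRL.IsCongFilter F)
    (hstrict : ∀ f ∈ F, ∀ b : B, b ∉ F → b < f)
    (bF : B) (hbF : bF ∈ F) (hbot : ∀ f ∈ F, bF ≤ f) :
    ∀ x : B, x ∉ F →
      IsLeast (IRL.cls F x) (x * bF) ∧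
      IsLeast (IRL.cls F x) (bF * x) ∧
      IsGreatest (IRL.cls F x) (IRL.ld bF x) ∧
      IsGreatest (IRL.cls F x) (IRL.rd x bF) := fun x _ =>
  bot_filter_sigma_gamma_general hF ⟨hbF, hbot⟩ x
end

section
/- Let D be a gluing of B and C over F. Then D is commutative (x·y = y·x for all x, y ∈ D) if and only if x·y = y·x for all x, y ∈ B and x·y = y·x for all x, y ∈ C. -/
/-!
If `b` lies in `B` but not in `C`, then everything below `b` lies in `B`; by integrality this
applies to `b * c` and `c * b` for an arbitrary `c`. Hence `r := (c * b) / b` lies in `B`, and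
`c ≤ r` gives `b * c ≤ b * r = r * b = c * b`. The left residual gives the reverse inequality, so
`b` is central. Two elements neither of which is of this kind both lie in `C`.
-/

section Residuation

variable {M : Type*} [PartialOrder M]

lemma commute_of_commute_residuals [Mul M] {b c : M} {l r : M → M}
    (gcl : GaloisConnection (b * ·) l) (gcr : GaloisConnection (· * b) r)
    (hl : Commute b (l (b * c))) (hr : Commute b (r (c * b))) : Commute b c := by
  apply le_antisymm
  · calc
      b * c ≤ b * r (c * b) := gcl.monotone_l (gcr.le_u_l c)
      _ = r (c * b) * b := hr
      _ = c * b := gcr.l_u_l_eq_l c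
  · calc
      c * b ≤ l (b * c) * b := gcr.monotone_l (gcl.le_u_l c)
      _ = b * l (b * c) := hl.symm
      _ = b * c := gcl.l_u_l_eq_l c

lemma commute_of_Iic_subset [MulOneClass M] (one_top : IsTop (1 : M)) {B : Set M} {b : M}
    {l r : M → M} (gcl : GaloisConnection (b * ·) l) (gcr : GaloisConnection (· * b) r)
    (hl : Set.MapsTo l B B) (hr : Set.MapsTo r B B) (hb : Set.Iic b ⊆ B)
    (comm : ∀ x ∈ B, Commute b x) (c : M) : Commute b c := by
  have mul_le_left : b * c ≤ b := by simpa only [mul_one] using gcl.monotone_l (one_top c)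
  have mul_le_right : c * b ≤ b := by simpa only [one_mul] using gcr.monotone_l (one_top c)
  exact commute_of_commute_residuals gcl gcr (comm _ (hl (hb mul_le_left)))
    (comm _ (hr (hb mul_le_right)))

end Residuation

lemma Iic_subset_of_mem_sdiff {P : Type*} [Preorder P] {B C : Set P}
    (union_eq : B ∪ C = Set.univ) (lt : ∀ b ∈ B \ C, ∀ c ∈ C \ B, b < c) {b : P}
    (hb : b ∈ B \ C) : Set.Iic b ⊆ B := by
  intro z hzb
  by_contra hzB
  have hzC : z ∈ C := (union_eq.ge (Set.mem_univ z)).resolve_left hzB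
  exact (lt b hb z ⟨hzC, hzB⟩).not_ge hzb

theorem gluing_commutative_iff_general {M : Type*} [PartialOrder M] [MulOneClass M]
    {ld rd : M → M → M} (gc_ld : ∀ x, GaloisConnection (x * ·) (ld x))
    (gc_rd : ∀ y, GaloisConnection (· * y) (rd · y)) (one_top : IsTop (1 : M)) {B C : Set M}
    (union_eq : B ∪ C = Set.univ) (lt : ∀ b ∈ B \ C, ∀ c ∈ C \ B, b < c)
    (B_ld : ∀ x ∈ B, ∀ y ∈ B, ld x y ∈ B) (B_rd : ∀ x ∈ B, ∀ y ∈ B, rd x y ∈ B) :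
    (∀ x y : M, x * y = y * x) ↔
      ((∀ x ∈ B, ∀ y ∈ B, x * y = y * x) ∧ (∀ x ∈ C, ∀ y ∈ C, x * y = y * x)) := by
  refine ⟨fun h => ⟨fun x _ y _ => h x y, fun x _ y _ => h x y⟩, ?_⟩
  rintro ⟨commB, commC⟩ x y
  have central : ∀ b ∉ C, ∀ c, Commute b c := by
    intro b hbC
    have hbB : b ∈ B := (union_eq.ge (Set.mem_univ b)).resolve_right hbC
    exact commute_of_Iic_subset one_top (gc_ld b) (gc_rd b) (B_ld b hbB)
      (fun x hx => B_rd x hx b hbB) (Iic_subset_of_mem_sdiff union_eq lt ⟨hbB, hbC⟩)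
      (commB b hbB)
  by_cases hx : x ∈ C
  · by_cases hy : y ∈ C
    · exact commC x hx y hy
    · exact (central y hy x).symm
  · exact central x hx y

lemma IRL.gc_mul_ld {α : Type*} [IRL α] (x : α) : GaloisConnection (x * ·) (IRL.ld x) :=
  fun y z => IRL.mul_le_iff_ld x y z

lemma IRL.gc_mul_rd {α : Type*} [IRL α] (y : α) : GaloisConnection (· * y) (IRL.rd · y) :=
  fun x z => IRL.mul_le_iff_rd x y z

lemma GluingOverF.lt_of_mem_sdiff {D : Type*} [IRL D] {B C F : Set D} (hg : GluingOverF B C F) :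
    ∀ b ∈ B \ C, ∀ c ∈ C \ B, b < c := by
  simpa only [← hg.inter_eq, Set.sdiff_self_inter, Set.sdiff_inter_self_eq_sdiff] using hg.lt_BC

/-- a gluing `D` of `B` and `C` over `F` is commutative iff both `B`
and `C` are commutative. -/
theorem gluing_commutative_iff {D : Type*} [IRL D] {B C F : Set D}
    (hg : GluingOverF B C F) :
    (∀ x y : D, x * y = y * x) ↔
      ((∀ x ∈ B, ∀ y ∈ B, x * y = y * x) ∧ (∀ x ∈ C, ∀ y ∈ C, x * y = y * x)) :=
  gluing_commutative_iff_general IRL.gc_mul_ld IRL.gc_mul_rd IRL.le_one hg.union_eq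
    hg.lt_of_mem_sdiff hg.B_ld hg.B_rd
end

section
/- Let A be a GL₂-chain and a, b ∈ A with a < b < 1 and a·a = b·b. Then A has a coatom c (i.e., c < 1 and x ≤ c for every x < 1) and b → a = c. -/
/-- A `GL₂`-chain: a bounded commutative integral residuated chain that is 2-potent
(`x·x·x = x·x`) and satisfies `x = 1 ∨ x·(x ∧ y) ≤ (x ∧ y)²`. -/
class GL2Chain (α : Type*) extends LinearOrder α, CommMonoid α where
  bot : α
  bot_le : ∀ x : α, bot ≤ x
  le_one : ∀ x : α, x ≤ 1
  himp : α → α → α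
  mul_le_iff : ∀ x y z : α, x * y ≤ z ↔ y ≤ himp x z
  pot2 : ∀ x : α, x * x * x = x * x
  gl2 : ∀ x y : α, x = 1 ∨ x * min x y ≤ min x y * min x y

/-!
Fix `a < b` with `b² ≤ a`. If `x < 1`, then `x·b ≤ b² ≤ a`: by monotonicity when `x ≤ b`, and by the
`GL₂` law when `b ≤ x`. If `1 ≤ x`, then `a < b ≤ x·b`. Hence `{x | x·b ≤ a}`, whose greatest
element is `b → a`, is exactly `{x | x < 1}`, whose greatest element is the coatom.
-/

section OrderedMulOneClass

variable {α : Type*} [LinearOrder α] [MulOneClass α] [MulRightMono α] {a b c : α}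

theorem setOf_mul_le_eq_Iio_one (gl2 : ∀ x < 1, b ≤ x → x * b ≤ b * b)
    (hab : a < b) (hbb : b * b ≤ a) : {x | x * b ≤ a} = Set.Iio 1 := by
  ext x
  rw [Set.mem_ofPred_eq, Set.mem_Iio]
  constructor
  · intro hx
    by_contra! h1x
    have hbx : b ≤ x * b := le_mul_of_one_le_left' h1x
    exact (hab.trans_le hbx).not_ge hx
  · intro hx
    have hxb : x * b ≤ b * b := (le_total x b).elim (fun h => mul_le_mul_left h b) (gl2 x hx)
    exact hxb.trans hbb

theorem GL2_himp_eq_coatom_general (gl2 : ∀ x < 1, b ≤ x → x * b ≤ b * b)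
    (hab : a < b) (hbb : b * b ≤ a) (hc : IsGreatest {x | x * b ≤ a} c) :
    IsGreatest (Set.Iio 1) c :=
  setOf_mul_le_eq_Iio_one gl2 hab hbb ▸ hc

end OrderedMulOneClass

namespace GL2Chain

variable {α : Type*} [GL2Chain α]

theorem gc_mul_himp (a : α) : GaloisConnection (a * ·) (himp a) :=
  mul_le_iff a

theorem isGreatest_himp (a b : α) : IsGreatest {x | x * a ≤ b} (himp a b) := by
  simpa only [mul_comm a] using (gc_mul_himp a).isGreatest_u (a := b)

instance : IsOrderedMonoid α where
  mul_le_mul_left x y hxy z := by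
    simpa only [mul_comm z] using (gc_mul_himp z).monotone_l hxy

theorem mul_self_le (a : α) : a * a ≤ a :=
  mul_le_of_le_one_right' (le_one a)

theorem mul_le_mul_self_of_lt_one {a b : α} (ha : a < 1) (hba : b ≤ a) : a * b ≤ b * b := by
  simpa only [min_eq_right hba] using (gl2 a b).resolve_left ha.ne

end GL2Chain

/-- in a GL₂-chain, if `a < b < 1` and `a² = b²`, then the chain has a
coatom `c` and `b → a = c`. -/
theorem GL2_himp_eq_coatom {α : Type*} [GL2Chain α] (a b : α)
    (hab : a < b) (hb : b < 1) (hsq : a * a = b * b) :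
    ∃ c : α, c < 1 ∧ (∀ x : α, x < 1 → x ≤ c) ∧ GL2Chain.himp b a = c := by
  have hc := GL2_himp_eq_coatom_general (fun _ => GL2Chain.mul_le_mul_self_of_lt_one) hab
    (hsq ▸ GL2Chain.mul_self_le a) (GL2Chain.isGreatest_himp b a)
  exact ⟨GL2Chain.himp b a, hc.1, fun _ hx => hc.2 hx, rfl⟩
end

section
/- (One-sided amalgams of the critical V-formation are amalgams.) Let D be any bounded commutative integral residuated lattice: a bounded lattice with least element 0 and greatest element 1, a commutative monoid operation · with unit 1, and a binary operation → with x·y ≤ z ⟺ y ≤ x → z for all x, y, z, where 1 is the greatest element. Let h : B → D be a map preserving min, max, ·, →, 0 and 1, and let k : C → D be an injective map preserving min, max, ·, →, 0 and 1, such that h(a_B) = k(a_C). Then h is injective. -/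
/-- A bounded commutative integral residuated lattice: a bounded lattice with least
element `bot` and greatest element `1`, a commutative monoid operation `·` with unit
`1`, and a residuum `→` with `x·y ≤ z ↔ y ≤ x → z`. -/
class BCIRL (α : Type*) extends Lattice α, CommMonoid α where
  bot : α
  bot_le : ∀ x : α, bot ≤ x
  le_one : ∀ x : α, x ≤ 1
  himp : α → α → α
  mul_le_iff : ∀ x y z : α, x * y ≤ z ↔ y ≤ himp x z

/-- Multiplication of the four-element GL₂-chain `B` with `0_B < a_B < b_B < 1_B`
(encoded as `0 < 1 < 2 < 3` in `Fin 4`): `x·y = min x y` except `b_B·b_B = a_B`. -/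
def Bmul (x y : Fin 4) : Fin 4 := if x = 2 ∧ y = 2 then 1 else min x y

/-- The residuum of `Bmul`. -/
def Bhimp (x y : Fin 4) : Fin 4 :=
  if x ≤ y then 3 else if x = 2 ∧ y = 1 then 2 else y

/-- Multiplication of the four-element Gödel chain `C` with `0_C < a_C < c_C < 1_C`
(encoded as `0 < 1 < 2 < 3` in `Fin 4`): `x·y = min x y`. -/
def Cmul (x y : Fin 4) : Fin 4 := min x y

/-- The residuum of `Cmul`. -/
def Chimp (x y : Fin 4) : Fin 4 := if x ≤ y then 3 else y

/-!
The extension of `A = {0_B, a_B, 1_B}` (encoded as `{0, 1, 3}`) to `B` is essential: a homomorphism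
`h` that separates the points of `A` separates `b_B` from them as well. If `h x = h b_B` with `x` in
`A`, squaring gives `h x = h a_B`, so `x = a_B`; but then `h (a_B → a_B) = h (b_B → a_B)`, that is,
`h 1_B = h b_B = h a_B`.
-/

section Congruence

variable {α β : Type*} {op : α → α → α} {op' : β → β → β} {f : α → β}

theorem apply_op_congr (hf : Function.Semiconj₂ f op op') {x x' y y' : α}
    (hx : f x = f x') (hy : f y = f y') : f (op x y) = f (op x' y') := by
  rw [hf.eq, hx, hy, ← hf.eq]

end Congruence

theorem Bmul_self_of_ne_two {x : Fin 4} (hx : x ≠ 2) : Bmul x x = x := by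
  simp [Bmul, hx]

section Essential

variable {D : Type*} {mul imp : D → D → D} {h : Fin 4 → D}

theorem apply_eq_apply_one_of_eq_apply_two (hmul : Function.Semiconj₂ h Bmul mul) {x : Fin 4}
    (hx : x ≠ 2) (hx2 : h x = h 2) : h x = h 1 :=
  calc
    h x = h (Bmul x x) := by rw [Bmul_self_of_ne_two hx]
    _ = h (Bmul 2 2) := apply_op_congr hmul hx2 hx2
    _ = h 1 := rfl

theorem apply_three_eq_apply_two_of_apply_one_eq_apply_two (himp : Function.Semiconj₂ h Bhimp imp)
    (h12 : h 1 = h 2) : h 3 = h 2 :=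
  calc
    h 3 = h (Bhimp 1 1) := rfl
    _ = h (Bhimp 2 1) := apply_op_congr himp h12 rfl
    _ = h 2 := rfl

theorem apply_two_notMem_image (hmul : Function.Semiconj₂ h Bmul mul)
    (himp : Function.Semiconj₂ h Bhimp imp) (hA : Set.InjOn h {0, 1, 3}) :
    h 2 ∉ h '' {0, 1, 3} := by
  rintro ⟨x, hx, hx2⟩
  have hx_ne : x ≠ 2 := by rintro rfl; simp at hx
  have hx1 : h x = h 1 := apply_eq_apply_one_of_eq_apply_two hmul hx_ne hx2
  have h12 : h 1 = h 2 := hx1.symm.trans hx2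
  have h32 : h 3 = h 2 := apply_three_eq_apply_two_of_apply_one_eq_apply_two himp h12
  have h13 : h 1 = h 3 := h12.trans h32.symm
  exact absurd (hA (by simp) (by simp) h13) (by decide)

theorem one_sided_amalgam_is_amalgam_general (hmul : Function.Semiconj₂ h Bmul mul)
    (himp : Function.Semiconj₂ h Bhimp imp) (hA : Set.InjOn h {0, 1, 3}) :
    Function.Injective h := by
  have univ_eq : (Set.univ : Set (Fin 4)) = insert 2 {0, 1, 3} := by ext x; fin_cases x <;> simp
  rw [← Set.injOn_univ, univ_eq, Set.injOn_insert (by simp)]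
  exact ⟨hA, apply_two_notMem_image hmul himp hA⟩

end Essential

/-- one-sided amalgams of the critical V-formation are amalgams: if
`D` is any bounded commutative integral residuated lattice, `h : B → D` is a
homomorphism (preserving `min`, `max`, `·`, `→`, `0`, `1`), `k : C → D` is an
injective homomorphism, and `h(a_B) = k(a_C)`, then `h` is injective. -/
theorem one_sided_amalgam_is_amalgam (D : Type) [BCIRL D] (h k : Fin 4 → D)
    (hmin : ∀ x y : Fin 4, h (min x y) = h x ⊓ h y)
    (hmax : ∀ x y : Fin 4, h (max x y) = h x ⊔ h y)
    (hmul : ∀ x y : Fin 4, h (Bmul x y) = h x * h y)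
    (hhimp : ∀ x y : Fin 4, h (Bhimp x y) = BCIRL.himp (h x) (h y))
    (hzero : h 0 = BCIRL.bot)
    (hone : h 3 = 1)
    (kinj : Function.Injective k)
    (kmin : ∀ x y : Fin 4, k (min x y) = k x ⊓ k y)
    (kmax : ∀ x y : Fin 4, k (max x y) = k x ⊔ k y)
    (kmul : ∀ x y : Fin 4, k (Cmul x y) = k x * k y)
    (khimp : ∀ x y : Fin 4, k (Chimp x y) = BCIRL.himp (k x) (k y))
    (kzero : k 0 = BCIRL.bot)
    (kone : k 3 = 1)
    (hk : h 1 = k 1) :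
    Function.Injective h := by
  have hkh : Set.EqOn k h {0, 1, 3} := by
    rintro x (rfl | rfl | rfl)
    exacts [kzero.trans hzero.symm, hk.symm, kone.trans hone.symm]
  exact one_sided_amalgam_is_amalgam_general hmul hhimp (kinj.injOn.congr hkh)
end
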